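/- Let 1 ≤ p < ∞ and let h : 𝕊^{m-1} × ℝ^m → ℝ be continuous with, for each ζ ∈ 𝕊^{m-1}, the function ω ↦ h(ζ,ω) coinciding on 𝔹^m with an element of ℋ_k. Set g = P_B[h] and, for 0 ≤ r < 1, g_r(η,ν) := g(rη,ν) for η ∈ 𝕊^{m-1}, ν ∈ ℝ^m. Then there exists a constant b_{m,k} > 0 depending only on m and k such that ‖g_r‖_p ≤ b_{m,k} ‖h‖_p for every 0 ≤ r < 1. -/

import Mathlib

noncomputable section

open MeasureTheory Metric Filter Topology
open scoped RealInnerProductSpace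

/-- `ℝ^m` as a Euclidean space. -/
abbrev Evec (m : ℕ) : Type := EuclideanSpace ℝ (Fin m)

/-- Partial derivative in the `i`-th coordinate direction. -/
def pdv {m : ℕ} (i : Fin m) (f : Evec m → ℝ) (x : Evec m) : ℝ :=
  fderiv ℝ f x (EuclideanSpace.single i 1)

/-- Euclidean Laplacian on `ℝ^m`. -/
def lapl {m : ℕ} (f : Evec m → ℝ) (x : Evec m) : ℝ :=
  ∑ i : Fin m, pdv i (pdv i f) x

/-- `p` is a real-valued polynomial function on `ℝ^m`, homogeneous of degree `k` and
harmonic; i.e. `p ∈ ℋ_k`. -/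
def IsHk (m k : ℕ) (p : Evec m → ℝ) : Prop :=
  (∃ P : MvPolynomial (Fin m) ℝ, ∀ x : Evec m, p x = MvPolynomial.eval (fun i => x i) P) ∧
  (∀ (c : ℝ) (x : Evec m), p (c • x) = c ^ k * p x) ∧
  (∀ x : Evec m, lapl p x = 0)

/-- The surface measure `dS` on the unit sphere `𝕊^{m-1}`, as a measure on `ℝ^m`. -/
def sphereM (m : ℕ) : Measure (Evec m) :=
  Measure.map Subtype.val ((volume : Measure (Evec m)).toSphere)

/-- `ω_m`, the surface area of the unit sphere `𝕊^{m-1}`. -/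
def omegaS (m : ℕ) : ℝ := (sphereM m Set.univ).toReal

/-- The constant `c_{m,k} = 2(m+2k-2)/((m-2)ω_m)`. -/
def cmk (m k : ℕ) : ℝ := 2 * ((m : ℝ) + 2 * k - 2) / (((m : ℝ) - 2) * omegaS m)

/-- The reflection `R_a(u) = u - 2⟨a,u⟩a/|a|²` (in Clifford notation `a u a/|a|²`). -/
def reflv {m : ℕ} (a u : Evec m) : Evec m :=
  u - (2 * ⟪a, u⟫ / ‖a‖ ^ 2) • a

/-- `dim ℋ_k`. -/
def hdim (m k : ℕ) : ℕ :=
  Nat.choose (m + k - 1) (m - 1) - Nat.choose (m + k - 3) (m - 1)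

/-- `Z` is the reproducing kernel `Z_k` of `ℋ_k` on the unit sphere: a symmetric,
rotation invariant kernel, bounded by `dim ℋ_k` on the unit ball, belonging to `ℋ_k`
in the first variable and reproducing elements of `ℋ_k` from their spherical values. -/
def IsZk (m k : ℕ) (Z : Evec m → Evec m → ℝ) : Prop :=
  (∀ v : Evec m, IsHk m k (fun u => Z u v)) ∧
  (∀ p : Evec m → ℝ, IsHk m k p → ∀ v : Evec m, (∫ u, Z u v * p u ∂(sphereM m)) = p v) ∧
  (∀ u v : Evec m, Z u v = Z v u) ∧
  (∀ u v : Evec m, ‖u‖ ≤ 1 → ‖v‖ ≤ 1 → |Z u v| ≤ (hdim m k : ℝ)) ∧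
  (∀ (A : Evec m ≃ₗᵢ[ℝ] Evec m) (u v : Evec m), Z (A u) (A v) = Z u v)

/-- The point `(x', y) ∈ ℝ^{d+1}` with first `d` coordinates `x'` and last coordinate `y`. -/
def upP (d : ℕ) (x' : Evec d) (y : ℝ) : Evec (d + 1) :=
  (EuclideanSpace.equiv (Fin (d + 1)) ℝ).symm
    (Fin.snoc (⇑(EuclideanSpace.equiv (Fin d) ℝ) x') y)

/-- The first `d` coordinates of a point of `ℝ^{d+1}`. -/
def downP (d : ℕ) (x : Evec (d + 1)) : Evec d :=
  (EuclideanSpace.equiv (Fin d) ℝ).symm (fun i => x (Fin.castSucc i))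

/-- The last coordinate of a point of `ℝ^{d+1}`. -/
def lastP (d : ℕ) (x : Evec (d + 1)) : ℝ := x (Fin.last d)

/-- The Poisson kernel `P_H` for bosonic Laplacians in the upper half-space `ℝ^{d+1}_+`,
`P_H(x,t,u,v) = c_{m,k} (y/|x-t|^m) Z_k(R_{x-t}(u), v)` with `m = d+1`, `x = (x',y)`,
`t = (t',0)`. -/
def PH (d k : ℕ) (Z : Evec (d + 1) → Evec (d + 1) → ℝ) (x' : Evec d) (y : ℝ)
    (t' : Evec d) (u v : Evec (d + 1)) : ℝ :=
  cmk (d + 1) k * (y / ‖upP d x' y - upP d t' 0‖ ^ (d + 1)) *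
    Z (reflv (upP d x' y - upP d t' 0) u) v

/-- The Poisson integral `P_H[f]` in the upper half-space. -/
def PHint (d k : ℕ) (Z : Evec (d + 1) → Evec (d + 1) → ℝ)
    (f : Evec d → Evec (d + 1) → ℝ) (x' : Evec d) (y : ℝ) (v : Evec (d + 1)) : ℝ :=
  ∫ t' : Evec d, (∫ u, PH d k Z x' y t' u v * f t' u ∂(sphereM (d + 1)))

/-- The Poisson kernel `P_B` for bosonic Laplacians in the unit ball. -/
def PB (m k : ℕ) (Z : Evec m → Evec m → ℝ) (x ζ ω ν : Evec m) : ℝ :=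
  (cmk m k / 2) * ((1 - ‖x‖ ^ 2) / ‖x - ζ‖ ^ m) * Z (reflv (x - ζ) ω) ν

/-- The Poisson integral `P_B[h]` in the unit ball. -/
def PBint (m k : ℕ) (Z : Evec m → Evec m → ℝ) (h : Evec m → Evec m → ℝ)
    (x ν : Evec m) : ℝ :=
  ∫ ζ, (∫ ω, PB m k Z x ζ ω ν * h ζ ω ∂(sphereM m)) ∂(sphereM m)

/-- Partial derivative in the first (`x`) variable. -/
def pd1 {m : ℕ} (i : Fin m) (f : Evec m → Evec m → ℝ) : Evec m → Evec m → ℝ :=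
  fun x u => fderiv ℝ (fun x₁ => f x₁ u) x (EuclideanSpace.single i 1)

/-- Partial derivative in the second (`u`) variable. -/
def pd2 {m : ℕ} (i : Fin m) (f : Evec m → Evec m → ℝ) : Evec m → Evec m → ℝ :=
  fun x u => fderiv ℝ (fun u₁ => f x u₁) u (EuclideanSpace.single i 1)

/-- The bosonic Laplacian `𝒟_k`. -/
def Dk (m k : ℕ) (f : Evec m → Evec m → ℝ) : Evec m → Evec m → ℝ := fun x u =>
  (∑ i : Fin m, pd1 i (pd1 i f) x u)
    - (4 / ((m : ℝ) + 2 * k - 2)) *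
        ∑ i : Fin m, ∑ j : Fin m, u i * pd1 i (pd2 j (pd1 j f)) x u
    + (4 * ‖u‖ ^ 2 / (((m : ℝ) + 2 * k - 2) * ((m : ℝ) + 2 * k - 4))) *
        ∑ i : Fin m, ∑ j : Fin m, pd2 i (pd1 i (pd2 j (pd1 j f))) x u

/-- `f ∈ C²(Ω×𝔹^m, ℋ_k)`: twice continuously differentiable on `Ω × 𝔹^m` and, for each
fixed `x ∈ Ω`, coinciding in the second variable with an element of `ℋ_k`. -/
def C2Hk (m k : ℕ) (Ω : Set (Evec m)) (f : Evec m → Evec m → ℝ) : Prop :=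
  ContDiffOn ℝ 2 (fun q : Evec m × Evec m => f q.1 q.2) (Ω ×ˢ ball (0 : Evec m) 1) ∧
  ∀ x ∈ Ω, ∃ q, IsHk m k q ∧ ∀ u ∈ closedBall (0 : Evec m) 1, f x u = q u

/-- The `L^p` norm `(∫_{ℝ^{m-1}} ∫_{𝕊^{m-1}} |f(x',u)|^p dS(u) dx')^{1/p}` (`m = d+1`),
valued in `ℝ≥0∞`. -/
def lpH (d : ℕ) (p : ℝ) (f : Evec d → Evec (d + 1) → ℝ) : ENNReal :=
  (∫⁻ x' : Evec d, ∫⁻ u, ENNReal.ofReal (|f x' u| ^ p) ∂(sphereM (d + 1))) ^ (1 / p)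

/-- `f ∈ L^p(ℝ^{m-1}×𝔹^m, ℋ_k)` (`m = d+1`). -/
def MemLpH (d k : ℕ) (p : ℝ) (f : Evec d → Evec (d + 1) → ℝ) : Prop :=
  Measurable (fun q : Evec d × Evec (d + 1) => f q.1 q.2) ∧
  (∀ x' : Evec d, ∃ q, IsHk (d + 1) k q ∧
    ∀ u ∈ closedBall (0 : Evec (d + 1)) 1, f x' u = q u) ∧
  lpH d p f < ⊤

/-- The `L^p` norm `(∫_{𝕊^{m-1}} ∫_{𝕊^{m-1}} |h(ζ,ω)|^p dS(ω) dS(ζ))^{1/p}`,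
valued in `ℝ≥0∞`. -/
def lpS (m : ℕ) (p : ℝ) (h : Evec m → Evec m → ℝ) : ENNReal :=
  (∫⁻ ζ, ∫⁻ ω, ENNReal.ofReal (|h ζ ω| ^ p) ∂(sphereM m) ∂(sphereM m)) ^ (1 / p)

/-- `h ∈ L^p(𝕊^{m-1}×𝔹^m, ℋ_k)`. -/
def MemLpS (m k : ℕ) (p : ℝ) (h : Evec m → Evec m → ℝ) : Prop :=
  Measurable (fun q : Evec m × Evec m => h q.1 q.2) ∧
  (∀ ζ : Evec m, ‖ζ‖ = 1 → ∃ q, IsHk m k q ∧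
    ∀ ω ∈ closedBall (0 : Evec m) 1, h ζ ω = q ω) ∧
  lpS m p h < ⊤

/-- Iterated partial derivative `D_x^α` in the first variable, for a multi-index `α ∈ ℕ^m`. -/
def Dx {m : ℕ} (α : Fin m → ℕ) (f : Evec m → Evec m → ℝ) : Evec m → Evec m → ℝ :=
  (List.finRange m).foldr (fun i g => (pd1 i)^[α i] g) f

/-- Iterated partial derivative `D_ν^β` in the second variable, for a multi-index `β ∈ ℕ^m`. -/
def Dv {m : ℕ} (β : Fin m → ℕ) (f : Evec m → Evec m → ℝ) : Evec m → Evec m → ℝ :=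
  (List.finRange m).foldr (fun i g => (pd2 i)^[β i] g) f

/-!
In absolute value the kernel `P_B` is at most a constant times the classical Poisson kernel
`(1 - |x|²) / |x - ζ|^m`, because reflections are isometries and `Z_k` is bounded on the sphere.
The classical kernel has mass bounded independently of `x = rη`: with `δ = 1 - r` one has
`|rη - ζ| ≥ max(δ, |ζ - η|) / 2`, and a spherical cap of radius `t` has measure `O(t^(m-1))`, so
that the dyadic annuli around `η` contribute a geometric series. Since `|rη - ζ| = |rζ - η|`
for unit vectors, both marginals of the kernel are bounded, and Schur's test concludes.
-/

section SphericalCaps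

open scoped Pointwise

variable {E : Type*} [NormedAddCommGroup E] [NormedSpace ℝ E]

lemma Ioo_smul_subset_smul_union_closedBall {s : Set E} {η : E} {t : ℝ}
    (hs : s ⊆ sphere 0 1 ∩ ball η t) :
    Set.Ioo (0 : ℝ) 1 • s ⊆ (1 - t) • (Set.Ioo (0 : ℝ) 1 • s) ∪ closedBall η (2 * t) := by
  rintro _ ⟨ρ, ⟨hρ0, hρ1⟩, x, hx, rfl⟩
  obtain ⟨hx1, hxt⟩ := hs hx
  rw [mem_sphere_zero_iff_norm] at hx1
  rcases lt_or_ge ρ (1 - t) with hρ | hρ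
  · have ht : 0 < 1 - t := hρ0.trans hρ
    refine .inl ⟨(ρ / (1 - t)) • x, ⟨_, ⟨div_pos hρ0 ht, (div_lt_one ht).2 hρ⟩, x, hx, rfl⟩, ?_⟩
    simp only [smul_smul, mul_div_cancel₀ _ ht.ne']
  · have hρx : dist (ρ • x) x = 1 - ρ := by
      rw [dist_eq_norm, show ρ • x - x = (ρ - 1) • x by module, norm_smul, hx1, mul_one,
        Real.norm_of_nonpos (by linarith), neg_sub]
    refine .inr (mem_closedBall.2 ?_)
    linarith [dist_triangle (ρ • x) x η, mem_ball.1 hxt]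

variable [FiniteDimensional ℝ E] [MeasurableSpace E] [BorelSpace E]
  (μ : Measure E) [μ.IsAddHaarMeasure]

/- By the covering above, `(1 - (1 - t)^d) μ(V)`, which is at least `t μ(V)`, is at most the measure
of a ball of radius `2t`, where `V` is the cone over `s`. -/
lemma mul_measureReal_Ioo_smul_le [Nontrivial E] {s : Set E} {η : E} {t : ℝ} (ht : 0 ≤ t)
    (ht1 : t ≤ 1) (hs : s ⊆ sphere 0 1 ∩ ball η t) :
    t * μ.real (Set.Ioo (0 : ℝ) 1 • s) ≤ μ.real (ball 0 1) * (2 * t) ^ Module.finrank ℝ E := by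
  set V : Set E := Set.Ioo (0 : ℝ) 1 • s
  have hV : V ⊆ ball 0 1 := by
    rintro _ ⟨ρ, hρ, x, hx, rfl⟩
    simpa [norm_smul, mem_sphere_zero_iff_norm.1 (hs hx).1, abs_of_pos hρ.1] using hρ.2
  have hVfin : μ ((1 - t) • V) ≠ ⊤ := by
    rw [Measure.addHaar_smul]
    exact ENNReal.mul_ne_top ENNReal.ofReal_ne_top
      (measure_ne_top_of_subset hV measure_ball_lt_top.ne)
  suffices μ.real V ≤ (1 - t) * μ.real V + (2 * t) ^ Module.finrank ℝ E * μ.real (ball 0 1) by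
    linarith
  calc μ.real V
      ≤ μ.real ((1 - t) • V) + μ.real (closedBall η (2 * t)) :=
        (measureReal_mono (Ioo_smul_subset_smul_union_closedBall hs)
          (measure_union_ne_top hVfin measure_closedBall_lt_top.ne)).trans
          (measureReal_union_le _ _)
    _ = (1 - t) ^ Module.finrank ℝ E * μ.real V +
          (2 * t) ^ Module.finrank ℝ E * μ.real (ball 0 1) := by
        rw [measureReal_def, Measure.addHaar_smul, ENNReal.toReal_mul, ← measureReal_def,
          ENNReal.toReal_ofReal (abs_nonneg _), abs_of_nonneg (pow_nonneg (by linarith) _),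
          Measure.addHaar_real_closedBall _ _ (by positivity)]
    _ ≤ _ := by
        gcongr
        exact pow_le_of_le_one (by linarith) (by linarith) Module.finrank_pos.ne'

lemma mul_toSphere_real_ball_le (η : sphere (0 : E) 1) {t : ℝ} (ht : 0 ≤ t) :
    t * μ.toSphere.real (ball η t) ≤
      μ.toSphere.real Set.univ * (2 * t) ^ Module.finrank ℝ E := by
  have : Nontrivial E := ⟨η, 0, ne_zero_of_mem_unit_sphere η⟩
  rcases le_total t 1 with ht1 | ht1
  · have hs : Subtype.val '' ball η t ⊆ sphere 0 1 ∩ ball (η : E) t := by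
      rintro _ ⟨y, hy, rfl⟩
      exact ⟨y.2, hy⟩
    rw [measureReal_def, μ.toSphere_apply' measurableSet_ball, ENNReal.toReal_mul,
      ENNReal.toReal_natCast, ← measureReal_def, Measure.toSphere_real_apply_univ, mul_left_comm,
      mul_assoc]
    exact mul_le_mul_of_nonneg_left (mul_measureReal_Ioo_smul_le μ ht ht1 hs) (Nat.cast_nonneg _)
  · rw [mul_comm t]
    have htpow : t ≤ (2 * t) ^ Module.finrank ℝ E :=
      (by linarith : t ≤ 2 * t).trans (le_self_pow₀ (by linarith) Module.finrank_pos.ne')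
    exact mul_le_mul (measureReal_mono (Set.subset_univ _)) htpow ht measureReal_nonneg

end SphericalCaps

lemma exists_mem_ball_and_div_max_dist_pow_le {X : Type*} [PseudoMetricSpace X] (x y : X) (d : ℕ)
    {δ : ℝ} (hδ : 0 < δ) :
    ∃ j : ℕ, y ∈ ball x (2 * (2 ^ j * δ)) ∧
      δ / max δ (dist y x) ^ d ≤ δ / (2 ^ j * δ) ^ d := by
  obtain ⟨j, hj, hj'⟩ := exists_nat_pow_near
    ((one_le_div hδ).2 (le_max_left δ (dist y x))) one_lt_two
  rw [le_div_iff₀ hδ] at hj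
  rw [div_lt_iff₀ hδ, pow_succ', mul_assoc] at hj'
  exact ⟨j, mem_ball.2 ((le_max_right _ _).trans_lt hj'), by gcongr⟩

lemma lintegral_div_max_dist_pow_le {X : Type*} [PseudoMetricSpace X] [MeasurableSpace X]
    [OpensMeasurableSpace X] {σ : Measure X} [IsFiniteMeasure σ] {x : X} {C : ℝ} {d : ℕ}
    (hσ : ∀ t, 0 ≤ t → t * σ.real (ball x t) ≤ C * t ^ d) {δ : ℝ} (hδ : 0 < δ) :
    ∫⁻ y, ENNReal.ofReal (δ / max δ (dist y x) ^ d) ∂σ ≤ ENNReal.ofReal (2 ^ d * C) := by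
  let a (j : ℕ) : ℝ := δ / (2 ^ j * δ) ^ d
  let B (j : ℕ) : Set X := ball x (2 * (2 ^ j * δ))
  have hC : 0 ≤ C := measureReal_nonneg.trans (by simpa using hσ 1 zero_le_one)
  have dyadic_le (y : X) : ENNReal.ofReal (δ / max δ (dist y x) ^ d) ≤
      ∑' j, (B j).indicator (fun _ => ENNReal.ofReal (a j)) y := by
    obtain ⟨j, hyj, hj⟩ := exists_mem_ball_and_div_max_dist_pow_le x y d hδ
    refine le_trans ?_ (ENNReal.le_tsum j)
    rw [Set.indicator_of_mem hyj]
    exact ENNReal.ofReal_le_ofReal hj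
  have term_le (j : ℕ) : a j * σ.real (B j) ≤ 2 ^ d * C / 2 / 2 ^ j := by
    have hball := hσ (2 * (2 ^ j * δ)) (by positivity)
    calc a j * σ.real (B j)
        = a j / (2 * (2 ^ j * δ)) * (2 * (2 ^ j * δ) * σ.real (B j)) := by field_simp
      _ ≤ a j / (2 * (2 ^ j * δ)) * (C * (2 * (2 ^ j * δ)) ^ d) := by gcongr
      _ = 2 ^ d * C / 2 / 2 ^ j := by
        simp only [a]
        rw [mul_pow 2]
        field_simp
  calc ∫⁻ y, ENNReal.ofReal (δ / max δ (dist y x) ^ d) ∂σ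
      ≤ ∫⁻ y, ∑' j, (B j).indicator (fun _ => ENNReal.ofReal (a j)) y ∂σ :=
        lintegral_mono dyadic_le
    _ = ∑' j, ENNReal.ofReal (a j * σ.real (B j)) := by
        rw [lintegral_tsum fun j => (measurable_const.indicator measurableSet_ball).aemeasurable]
        refine tsum_congr fun j => ?_
        rw [lintegral_indicator_const measurableSet_ball, ENNReal.ofReal_mul (by positivity),
          ofReal_measureReal]
    _ ≤ ∑' j : ℕ, ENNReal.ofReal (2 ^ d * C / 2 / 2 ^ j) := by
        gcongr with j
        exact term_le j
    _ = ENNReal.ofReal (2 ^ d * C) := by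
        rw [← ENNReal.ofReal_tsum_of_nonneg (fun j => by positivity)
          (summable_geometric_two' _), tsum_geometric_two']

section BallPoissonKernel

variable {E : Type*} [NormedAddCommGroup E]

/-- The classical Poisson kernel of the unit ball of `E`, without the normalizing factor
`1 / ω_d`, where `d` is the dimension of `E`. -/
def ballPoissonKernel [Module ℝ E] (x ζ : E) : ℝ :=
  (1 - ‖x‖ ^ 2) / ‖x - ζ‖ ^ Module.finrank ℝ E

lemma ballPoissonKernel_smul_comm [InnerProductSpace ℝ E] {x y : E} (hx : ‖x‖ = 1)
    (hy : ‖y‖ = 1) (r : ℝ) :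
    ballPoissonKernel (r • x) y = ballPoissonKernel (r • y) x := by
  have hdist : ‖r • x - y‖ = ‖r • y - x‖ := by
    rw [← sq_eq_sq₀ (norm_nonneg _) (norm_nonneg _), norm_sub_sq_real, norm_sub_sq_real,
      norm_smul, norm_smul, real_inner_smul_left, real_inner_smul_left, real_inner_comm, hx, hy]
  rw [ballPoissonKernel, ballPoissonKernel, hdist, norm_smul, norm_smul, hx, hy]

variable [NormedSpace ℝ E]

lemma ballPoissonKernel_nonneg {x : E} (hx : ‖x‖ ≤ 1) (ζ : E) : 0 ≤ ballPoissonKernel x ζ :=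
  div_nonneg (by nlinarith [norm_nonneg x]) (by positivity)

lemma measurable_ballPoissonKernel [MeasurableSpace E] [BorelSpace E]
    [SecondCountableTopology E] : Measurable fun q : E × E => ballPoissonKernel q.1 q.2 := by
  unfold ballPoissonKernel
  fun_prop

lemma max_dist_le_two_mul_norm_smul_sub {η ζ : E} (hη : ‖η‖ = 1) (hζ : ‖ζ‖ = 1) {r : ℝ}
    (hr : 0 ≤ r) (hr1 : r ≤ 1) : max (1 - r) (dist ζ η) ≤ 2 * ‖r • η - ζ‖ := by
  have hrη : ‖r • η‖ = r := by rw [norm_smul, hη, mul_one, Real.norm_of_nonneg hr]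
  have hδ : 1 - r ≤ ‖r • η - ζ‖ := by
    simpa only [hζ, hrη, norm_sub_rev ζ] using norm_sub_norm_le ζ (r • η)
  have hηr : ‖r • η - η‖ = 1 - r := by
    rw [show r • η - η = (r - 1) • η by module, norm_smul, hη, mul_one,
      Real.norm_of_nonpos (by linarith), neg_sub]
  have hdist : dist ζ η ≤ ‖r • η - ζ‖ + (1 - r) := by
    rw [dist_eq_norm, ← hηr, norm_sub_rev (r • η) ζ]
    exact norm_sub_le_norm_sub_add_norm_sub _ _ _
  exact max_le (by linarith) (by linarith)

lemma ballPoissonKernel_smul_le {η ζ : E} (hη : ‖η‖ = 1) (hζ : ‖ζ‖ = 1) {r : ℝ} (hr : 0 ≤ r)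
    (hr1 : r < 1) :
    ballPoissonKernel (r • η) ζ ≤ 2 ^ (Module.finrank ℝ E + 1) *
      ((1 - r) / max (1 - r) (dist ζ η) ^ Module.finrank ℝ E) := by
  have hmax : 0 < max (1 - r) (dist ζ η) := lt_max_of_lt_left (by linarith)
  have hnorm := max_dist_le_two_mul_norm_smul_sub hη hζ hr hr1.le
  calc ballPoissonKernel (r • η) ζ
      = (1 - r ^ 2) / ‖r • η - ζ‖ ^ Module.finrank ℝ E := by
        rw [ballPoissonKernel, norm_smul, hη, mul_one, Real.norm_of_nonneg hr]
    _ ≤ 2 * (1 - r) / (max (1 - r) (dist ζ η) / 2) ^ Module.finrank ℝ E := by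
        gcongr
        · nlinarith
        · linarith
    _ = _ := by
        rw [div_pow, pow_succ]
        field_simp

lemma lintegral_toSphere_ballPoissonKernel_le [FiniteDimensional ℝ E] [MeasurableSpace E]
    [BorelSpace E] (μ : Measure E) [μ.IsAddHaarMeasure] (η : sphere (0 : E) 1) {r : ℝ}
    (hr : 0 ≤ r) (hr1 : r < 1) :
    ∫⁻ ζ : sphere (0 : E) 1, ENNReal.ofReal (ballPoissonKernel (r • (η : E)) ζ) ∂μ.toSphere ≤
      ENNReal.ofReal (2 * 8 ^ Module.finrank ℝ E * μ.toSphere.real Set.univ) := by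
  set d := Module.finrank ℝ E
  have hcap (t : ℝ) (ht : 0 ≤ t) : t * μ.toSphere.real (ball η t) ≤
      2 ^ d * μ.toSphere.real Set.univ * t ^ d :=
    (mul_toSphere_real_ball_le μ η ht).trans_eq (by ring)
  calc ∫⁻ ζ : sphere (0 : E) 1, ENNReal.ofReal (ballPoissonKernel (r • (η : E)) ζ) ∂μ.toSphere
      ≤ ∫⁻ ζ : sphere (0 : E) 1, ENNReal.ofReal (2 ^ (d + 1)) *
          ENNReal.ofReal ((1 - r) / max (1 - r) (dist ζ η) ^ d) ∂μ.toSphere := by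
        gcongr with ζ
        rw [← ENNReal.ofReal_mul (by positivity)]
        gcongr
        exact ballPoissonKernel_smul_le (norm_eq_of_mem_sphere η) (norm_eq_of_mem_sphere ζ) hr hr1
    _ ≤ ENNReal.ofReal (2 ^ (d + 1)) *
          ENNReal.ofReal (2 ^ d * (2 ^ d * μ.toSphere.real Set.univ)) := by
        rw [lintegral_const_mul' _ _ ENNReal.ofReal_ne_top]
        gcongr
        exact lintegral_div_max_dist_pow_le hcap (by linarith)
    _ = _ := by
        rw [← ENNReal.ofReal_mul (by positivity), show (8 : ℝ) = 2 * 2 * 2 by norm_num, mul_pow,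
          mul_pow]
        ring_nf

end BallPoissonKernel

section SchurTest

variable {α β : Type*} [MeasurableSpace α] [MeasurableSpace β] {μ : Measure α} {ν : Measure β}
  {p : ℝ}

/- Jensen's inequality for the measure with density `w`. -/
lemma rpow_lintegral_mul_le {w f : α → ENNReal} (hw : AEMeasurable w μ) (hf : AEMeasurable f μ)
    (hp : 1 ≤ p) :
    (∫⁻ x, w x * f x ∂μ) ^ p ≤ (∫⁻ x, w x ∂μ) ^ (p - 1) * ∫⁻ x, w x * f x ^ p ∂μ := by
  have hp0 : 0 < p := by linarith
  have hjensen := eLpNorm'_le_eLpNorm'_mul_rpow_measure_univ (μ := μ.withDensity w) one_pos hp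
    (hf.mono_ac (withDensity_absolutelyContinuous μ w)).aestronglyMeasurable
  simp only [eLpNorm'_eq_lintegral_enorm, enorm_eq_self, ENNReal.rpow_one, div_one,
    withDensity_apply _ MeasurableSet.univ, Measure.restrict_univ,
    lintegral_withDensity_eq_lintegral_mul₀ hw hf,
    lintegral_withDensity_eq_lintegral_mul₀ hw (hf.pow_const p), Pi.mul_apply] at hjensen
  refine (ENNReal.rpow_le_rpow hjensen hp0.le).trans_eq ?_
  rw [ENNReal.mul_rpow_of_nonneg _ _ hp0.le, ← ENNReal.rpow_mul, ← ENNReal.rpow_mul,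
    one_div_mul_cancel hp0.ne', ENNReal.rpow_one, sub_mul, one_mul, one_div_mul_cancel hp0.ne',
    mul_comm]

lemma lintegral_rpow_lintegral_mul_le [SFinite μ] [SFinite ν] {K : α → β → ENNReal}
    (hK : Measurable (Function.uncurry K)) {f : β → ENNReal} (hf : AEMeasurable f ν) {A : ENNReal}
    (hrow : ∀ᵐ x ∂μ, ∫⁻ y, K x y ∂ν ≤ A) (hcol : ∀ᵐ y ∂ν, ∫⁻ x, K x y ∂μ ≤ A) (hp : 1 ≤ p) :
    ∫⁻ x, (∫⁻ y, K x y * f y ∂ν) ^ p ∂μ ≤ A ^ p * ∫⁻ y, f y ^ p ∂ν := by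
  have hKf : AEMeasurable (Function.uncurry fun x y => K x y * f y ^ p) (μ.prod ν) :=
    hK.aemeasurable.mul (hf.pow_const p).comp_snd
  calc ∫⁻ x, (∫⁻ y, K x y * f y ∂ν) ^ p ∂μ
      ≤ ∫⁻ x, A ^ (p - 1) * ∫⁻ y, K x y * f y ^ p ∂ν ∂μ := by
        refine lintegral_mono_ae ?_
        filter_upwards [hrow] with x hx
        refine (rpow_lintegral_mul_le hK.of_uncurry_left.aemeasurable hf hp).trans ?_
        gcongr
    _ = A ^ (p - 1) * ∫⁻ y, ∫⁻ x, K x y * f y ^ p ∂μ ∂ν := by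
        rw [lintegral_const_mul'' _ hKf.lintegral_prod_right, lintegral_lintegral_swap hKf]
    _ ≤ A ^ (p - 1) * ∫⁻ y, A * f y ^ p ∂ν := by
        refine mul_le_mul_right (lintegral_mono_ae ?_) _
        filter_upwards [hcol] with y hy
        rw [lintegral_mul_const _ hK.of_uncurry_right]
        gcongr
    _ = A ^ p * ∫⁻ y, f y ^ p ∂ν := by
        nth_rw 3 [← sub_add_cancel p 1]
        rw [lintegral_const_mul'' _ (hf.pow_const p), ← mul_assoc,
          ENNReal.rpow_add_of_nonneg _ _ (by linarith) zero_le_one, ENNReal.rpow_one]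

theorem schur_test [SFinite μ] [SFinite ν] {K : α → β → ENNReal}
    (hK : Measurable (Function.uncurry K)) {f : β → ENNReal} (hf : AEMeasurable f ν) {A : ENNReal}
    (hrow : ∀ᵐ x ∂μ, ∫⁻ y, K x y ∂ν ≤ A) (hcol : ∀ᵐ y ∂ν, ∫⁻ x, K x y ∂μ ≤ A) (hp : 1 ≤ p) :
    (∫⁻ x, (∫⁻ y, K x y * f y ∂ν) ^ p ∂μ) ^ (1 / p) ≤ A * (∫⁻ y, f y ^ p ∂ν) ^ (1 / p) := by
  have hp0 : 0 < p := by linarith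
  refine (ENNReal.rpow_le_rpow (lintegral_rpow_lintegral_mul_le hK hf hrow hcol hp)
    (by positivity)).trans_eq ?_
  rw [ENNReal.mul_rpow_of_nonneg _ _ (by positivity), ← ENNReal.rpow_mul,
    mul_one_div_cancel hp0.ne', ENNReal.rpow_one]

end SchurTest

section SphereMeasure

variable {m : ℕ}

instance isFiniteMeasure_sphereM : IsFiniteMeasure (sphereM m) := by
  unfold sphereM
  infer_instance

lemma lintegral_sphereM (f : Evec m → ENNReal) :
    ∫⁻ x, f x ∂sphereM m =
      ∫⁻ x : sphere (0 : Evec m) 1, f x ∂(volume : Measure (Evec m)).toSphere :=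
  (MeasurableEmbedding.subtype_coe isClosed_sphere.measurableSet).lintegral_map f

lemma omegaS_eq_toSphere_real_univ :
    omegaS m = (volume : Measure (Evec m)).toSphere.real Set.univ := by
  rw [omegaS, sphereM, Measure.map_apply measurable_subtype_coe .univ, Set.preimage_univ,
    measureReal_def]

lemma ae_sphereM_mem_sphere : ∀ᵐ x ∂sphereM m, x ∈ sphere (0 : Evec m) 1 :=
  (ae_map_iff measurable_subtype_coe.aemeasurable isClosed_sphere.measurableSet).2
    (.of_forall Subtype.property)

lemma ae_norm_eq_one_sphereM : ∀ᵐ x ∂sphereM m, ‖x‖ = 1 :=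
  ae_sphereM_mem_sphere.mono fun _ => mem_sphere_zero_iff_norm.1

lemma omegaS_pos (hm : 1 ≤ m) : 0 < omegaS m := by
  have : Nonempty (Fin m) := ⟨⟨0, hm⟩⟩
  rw [omegaS_eq_toSphere_real_univ, measureReal_def]
  exact ENNReal.toReal_pos (Measure.measure_univ_ne_zero.2 (Measure.toSphere_ne_zero volume))
    (measure_ne_top _ _)

lemma aemeasurable_sphereM_prod_of_continuousOn {h : Evec m × Evec m → ℝ}
    (hh : ContinuousOn h (sphere 0 1 ×ˢ Set.univ)) :
    AEMeasurable h ((sphereM m).prod (sphereM m)) := by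
  have hae : ∀ᵐ q ∂(sphereM m).prod (sphereM m), q ∈ sphere (0 : Evec m) 1 ×ˢ Set.univ :=
    (Measure.quasiMeasurePreserving_fst.ae ae_sphereM_mem_sphere).mono fun _ hq => ⟨hq, trivial⟩
  rw [← Measure.restrict_eq_self_of_ae_mem hae]
  exact hh.aemeasurable (isClosed_sphere.measurableSet.prod .univ)

lemma lintegral_sphereM_ballPoissonKernel_le {η : Evec m} (hη : ‖η‖ = 1) {r : ℝ} (hr : 0 ≤ r)
    (hr1 : r < 1) :
    ∫⁻ ζ, ENNReal.ofReal (ballPoissonKernel (r • η) ζ) ∂sphereM m ≤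
      ENNReal.ofReal (2 * 8 ^ m * omegaS m) := by
  simpa only [lintegral_sphereM, omegaS_eq_toSphere_real_univ, finrank_euclideanSpace_fin] using
    lintegral_toSphere_ballPoissonKernel_le volume ⟨η, mem_sphere_zero_iff_norm.2 hη⟩ hr hr1

lemma lintegral_sphereM_prod_ballPoissonKernel_le {η : Evec m} (hη : ‖η‖ = 1) {r : ℝ}
    (hr : 0 ≤ r) (hr1 : r < 1) (c : ℝ) :
    ∫⁻ b : Evec m × Evec m, ENNReal.ofReal (c * ballPoissonKernel (r • η) b.1)
        ∂(sphereM m).prod (sphereM m) ≤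
      ENNReal.ofReal (2 * c * 8 ^ m * omegaS m ^ 2) := by
  have hrη : ‖r • η‖ ≤ 1 := by simpa [norm_smul, hη, abs_of_nonneg hr] using hr1.le
  have hω : 0 ≤ omegaS m := ENNReal.toReal_nonneg
  have hP : Measurable fun ζ : Evec m => ballPoissonKernel (r • η) ζ :=
    measurable_ballPoissonKernel.of_uncurry_left
  calc ∫⁻ b : Evec m × Evec m, ENNReal.ofReal (c * ballPoissonKernel (r • η) b.1)
        ∂(sphereM m).prod (sphereM m)
      = ENNReal.ofReal c * (∫⁻ ζ, ENNReal.ofReal (ballPoissonKernel (r • η) ζ) ∂sphereM m) *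
          sphereM m Set.univ := by
        simp only [ENNReal.ofReal_mul' (ballPoissonKernel_nonneg hrη _)]
        rw [lintegral_const_mul' _ _ ENNReal.ofReal_ne_top, mul_assoc]
        congr 1
        simpa using lintegral_prod_mul (μ := sphereM m) (ν := sphereM m)
          hP.ennreal_ofReal.aemeasurable (aemeasurable_const (b := (1 : ENNReal)))
    _ ≤ ENNReal.ofReal c * ENNReal.ofReal (2 * 8 ^ m * omegaS m) *
          ENNReal.ofReal (omegaS m) := by
        gcongr
        · exact lintegral_sphereM_ballPoissonKernel_le hη hr hr1
        · exact (ENNReal.ofReal_toReal (measure_ne_top _ _)).ge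
    _ = _ := by
        rw [← ENNReal.ofReal_mul' (by positivity), ← ENNReal.ofReal_mul' hω]
        ring_nf

lemma lpS_eq_lintegral_prod {p : ℝ} (hp : 0 ≤ p) {h : Evec m → Evec m → ℝ}
    (hh : AEMeasurable (fun q : Evec m × Evec m => h q.1 q.2) ((sphereM m).prod (sphereM m))) :
    lpS m p h = (∫⁻ q, ‖h q.1 q.2‖ₑ ^ p ∂(sphereM m).prod (sphereM m)) ^ (1 / p) := by
  rw [lintegral_prod _ (hh.enorm.pow_const p)]
  simp only [lpS, Real.enorm_eq_ofReal_abs, ENNReal.ofReal_rpow_of_nonneg (abs_nonneg _) hp]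

lemma lpS_le_lintegral_prod {p : ℝ} (hp : 0 ≤ p) {g : Evec m → Evec m → ℝ}
    {G : Evec m × Evec m → ENNReal} (hG : AEMeasurable G ((sphereM m).prod (sphereM m)))
    (hgG : ∀ η ν, ‖η‖ = 1 → ‖ν‖ = 1 → ‖g η ν‖ₑ ≤ G (η, ν)) :
    lpS m p g ≤ (∫⁻ q, G q ^ p ∂(sphereM m).prod (sphereM m)) ^ (1 / p) := by
  rw [lpS, lintegral_prod _ (hG.pow_const p)]
  refine ENNReal.rpow_le_rpow (lintegral_mono_ae ?_) (by positivity)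
  filter_upwards [ae_norm_eq_one_sphereM] with η hη
  refine lintegral_mono_ae ?_
  filter_upwards [ae_norm_eq_one_sphereM] with ν hν
  rw [← ENNReal.ofReal_rpow_of_nonneg (abs_nonneg _) hp, ← Real.enorm_eq_ofReal_abs]
  gcongr
  exact hgG η ν hη hν

end SphereMeasure

section BosonicPoissonIntegral

variable {m k : ℕ} {Z : Evec m → Evec m → ℝ} {M r : ℝ}

lemma norm_reflv (a u : Evec m) : ‖reflv a u‖ = ‖u‖ := by
  have hreflv : reflv a u = -(Submodule.span ℝ {a}).reflection u := by
    rw [Submodule.reflection_singleton_apply, reflv]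
    simp only [RCLike.ofReal_real_eq_id, id_eq]
    module
  rw [hreflv, norm_neg, LinearIsometryEquiv.norm_map]

lemma enorm_PB_le (hZ : ∀ u v, ‖u‖ = 1 → ‖v‖ = 1 → |Z u v| ≤ M) {x ω ν : Evec m}
    (hx : ‖x‖ ≤ 1) (ζ : Evec m) (hω : ‖ω‖ = 1) (hν : ‖ν‖ = 1) :
    ‖PB m k Z x ζ ω ν‖ₑ ≤ ENNReal.ofReal (|cmk m k| / 2 * M * ballPoissonKernel x ζ) := by
  have hP := ballPoissonKernel_nonneg hx ζ
  have hPB : PB m k Z x ζ ω ν =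
      cmk m k / 2 * ballPoissonKernel x ζ * Z (reflv (x - ζ) ω) ν := by
    rw [PB, ballPoissonKernel, finrank_euclideanSpace_fin]
  rw [hPB, Real.enorm_eq_ofReal_abs, abs_mul, abs_mul, abs_div, abs_two, abs_of_nonneg hP,
    mul_right_comm]
  gcongr
  exact hZ _ _ ((norm_reflv _ _).trans hω) hν

lemma enorm_PBint_le (hZ : ∀ u v, ‖u‖ = 1 → ‖v‖ = 1 → |Z u v| ≤ M) {h : Evec m → Evec m → ℝ}
    (hh : AEMeasurable (fun q : Evec m × Evec m => h q.1 q.2) ((sphereM m).prod (sphereM m)))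
    {x ν : Evec m} (hx : ‖x‖ ≤ 1) (hν : ‖ν‖ = 1) :
    ‖PBint m k Z h x ν‖ₑ ≤
      ∫⁻ b : Evec m × Evec m, ENNReal.ofReal (|cmk m k| / 2 * M * ballPoissonKernel x b.1) *
        ‖h b.1 b.2‖ₑ ∂(sphereM m).prod (sphereM m) := by
  have hP : Measurable fun ζ : Evec m => ballPoissonKernel x ζ :=
    measurable_ballPoissonKernel.of_uncurry_left
  have hPh : AEMeasurable (fun b : Evec m × Evec m =>
      ENNReal.ofReal (|cmk m k| / 2 * M * ballPoissonKernel x b.1) * ‖h b.1 b.2‖ₑ)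
      ((sphereM m).prod (sphereM m)) := by
    fun_prop
  rw [lintegral_prod _ hPh]
  refine (enorm_integral_le_lintegral_enorm _).trans (lintegral_mono fun ζ => ?_)
  refine (enorm_integral_le_lintegral_enorm _).trans (lintegral_mono_ae ?_)
  filter_upwards [ae_norm_eq_one_sphereM] with ω hω
  rw [enorm_mul]
  gcongr
  exact enorm_PB_le hZ hx ζ hω hν

theorem lpS_PBint_le (hZ : ∀ u v, ‖u‖ = 1 → ‖v‖ = 1 → |Z u v| ≤ M) {p : ℝ} (hp : 1 ≤ p)
    {h : Evec m → Evec m → ℝ}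
    (hh : AEMeasurable (fun q : Evec m × Evec m => h q.1 q.2) ((sphereM m).prod (sphereM m)))
    (hr : 0 ≤ r) (hr1 : r < 1) :
    lpS m p (fun η ν => PBint m k Z h (r • η) ν) ≤
      ENNReal.ofReal (|cmk m k| * M * 8 ^ m * omegaS m ^ 2) * lpS m p h := by
  set c : ℝ := |cmk m k| / 2 * M with hc
  let K (a b : Evec m × Evec m) : ENNReal := ENNReal.ofReal (c * ballPoissonKernel (r • a.1) b.1)
  have hK : Measurable (Function.uncurry K) :=
    ((measurable_ballPoissonKernel.comp
      (f := fun q : (Evec m × Evec m) × Evec m × Evec m => (r • q.1.1, q.2.1))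
      (by fun_prop)).const_mul c).ennreal_ofReal
  have hae : ∀ᵐ q ∂(sphereM m).prod (sphereM m), ‖q.1‖ = 1 :=
    Measure.quasiMeasurePreserving_fst.ae ae_norm_eq_one_sphereM
  have hrow : ∀ᵐ a ∂(sphereM m).prod (sphereM m), ∫⁻ b, K a b ∂(sphereM m).prod (sphereM m) ≤
      ENNReal.ofReal (2 * c * 8 ^ m * omegaS m ^ 2) :=
    hae.mono fun a ha => lintegral_sphereM_prod_ballPoissonKernel_le ha hr hr1 c
  have hcol : ∀ᵐ b ∂(sphereM m).prod (sphereM m), ∫⁻ a, K a b ∂(sphereM m).prod (sphereM m) ≤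
      ENNReal.ofReal (2 * c * 8 ^ m * omegaS m ^ 2) := by
    filter_upwards [hae, hrow] with b hb hKb
    refine (lintegral_congr_ae ?_).trans_le hKb
    filter_upwards [hae] with a ha
    simp only [K, ballPoissonKernel_smul_comm ha hb]
  rw [lpS_eq_lintegral_prod (by linarith) hh]
  refine (lpS_le_lintegral_prod (by linarith) ?_ fun η ν hη hν =>
    enorm_PBint_le hZ hh ?_ hν).trans ((schur_test hK hh.enorm hrow hcol hp).trans_eq ?_)
  · exact (hK.aemeasurable.mul hh.enorm.comp_snd).lintegral_prod_right'
  · simpa [norm_smul, hη, abs_of_nonneg hr] using hr1.le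
  · rw [hc]
    ring_nf

lemma cmk_pos (hm : 3 ≤ m) : 0 < cmk m k := by
  have hω := omegaS_pos (m := m) (by omega)
  have hm' : (3 : ℝ) ≤ m := by exact_mod_cast hm
  exact div_pos (by linarith [k.cast_nonneg (α := ℝ)]) (mul_pos (by linarith) hω)

lemma hdim_pos (hm : 2 ≤ m) : 0 < hdim m k := by
  obtain ⟨n, rfl⟩ := Nat.exists_eq_add_of_le' hm
  have hpascal := Nat.choose_succ_succ (n + k) n
  have hpos : 0 < (n + k).choose n := Nat.choose_pos (by omega)
  have hmono : (n + 2 + k - 3).choose (n + 1) ≤ (n + k).choose (n + 1) :=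
    Nat.choose_le_choose _ (by omega)
  rw [hdim, show n + 2 + k - 1 = n + k + 1 by omega, show n + 2 - 1 = n + 1 by omega]
  simp only [Nat.succ_eq_add_one] at hpascal
  omega

end BosonicPoissonIntegral

theorem stmt_9_general (m k : ℕ) (hm : 3 ≤ m) :
    ∃ b : ℝ, 0 < b ∧
      ∀ Z : Evec m → Evec m → ℝ, IsZk m k Z →
        ∀ p : ℝ, 1 ≤ p →
          ∀ h : Evec m → Evec m → ℝ,
            AEMeasurable (fun q : Evec m × Evec m => h q.1 q.2)
              ((sphereM m).prod (sphereM m)) →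
            ∀ r : ℝ, 0 ≤ r → r < 1 →
              lpS m p (fun η ν => PBint m k Z h (r • η) ν) ≤
                ENNReal.ofReal b * lpS m p h := by
  have hω := omegaS_pos (m := m) (by omega)
  have hc := cmk_pos (k := k) hm
  have hd : 0 < (hdim m k : ℝ) := by exact_mod_cast hdim_pos (by omega)
  refine ⟨|cmk m k| * hdim m k * 8 ^ m * omegaS m ^ 2, by positivity, ?_⟩
  intro Z ⟨_, _, _, hbound, _⟩ p hp h hh r hr hr1
  exact lpS_PBint_le (fun u v hu hv => hbound u v hu.le hv.le) hp hh hr hr1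

/-- Theorem `thmbdd`, case `1 ≤ p < ∞`: dilation bound for the
unit-ball Poisson integral of continuous data, with a constant depending only on
`m` and `k`. -/
theorem stmt_9 (m k : ℕ) (hm : 3 ≤ m) (hk : 1 ≤ k)
    (Z : Evec m → Evec m → ℝ) (hZ : IsZk m k Z) :
    ∃ b : ℝ, 0 < b ∧
      ∀ p : ℝ, 1 ≤ p →
        ∀ h : Evec m → Evec m → ℝ,
          ContinuousOn (fun q : Evec m × Evec m => h q.1 q.2)
            (sphere (0 : Evec m) 1 ×ˢ (Set.univ : Set (Evec m))) →
          (∀ ζ : Evec m, ‖ζ‖ = 1 → ∃ q, IsHk m k q ∧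
            ∀ ω ∈ ball (0 : Evec m) 1, h ζ ω = q ω) →
          ∀ r : ℝ, 0 ≤ r → r < 1 →
            lpS m p (fun η ν => PBint m k Z h (r • η) ν) ≤
              ENNReal.ofReal b * lpS m p h := by
  obtain ⟨b, hb, hbound⟩ := stmt_9_general m k hm
  exact ⟨b, hb, fun p hp h hh _ =>
    hbound Z hZ p hp h (aemeasurable_sphereM_prod_of_continuousOn hh)⟩
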